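/- For all integers L, i, j with i ≥ 0, j ≥ 0 and L ≥ i+j, the identity \sum_{k=0}^{\min(i,j)} q^{T_{i+j-k} + T_k} [L-i-j+k; k] [L-j; i-k] [L-i; j-k] = q^{T_i + T_j} \binom{L}{i, j, L-i-j}_q holds as an identity of polynomials in q, where [m; r] denotes the Gaussian binomial coefficient and \binom{L}{i, j, L-i-j}_q = (q)_L / ((q)_i (q)_j (q)_{L-i-j}) is the q-multinomial coefficient of order 3. -/

import Mathlib

open Finset

/-- `(q)_n = (q;q)_n = ∏_{t=0}^{n-1} (1 - q^{t+1})` in `ℚ(q)`. -/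
noncomputable def qPoch (n : ℕ) : RatFunc ℚ :=
  ∏ t ∈ Finset.range n, (1 - (RatFunc.X : RatFunc ℚ) ^ (t + 1))

/-- The Gaussian (q-)binomial coefficient `[m; r] = (q)_m / ((q)_r (q)_{m-r})` for
`0 ≤ r ≤ m`, and `0` otherwise. -/
noncomputable def qbin (m r : ℤ) : RatFunc ℚ :=
  if 0 ≤ r ∧ r ≤ m then qPoch m.toNat / (qPoch r.toNat * qPoch (m - r).toNat) else 0

/-- The q-multinomial coefficient of order 3,
`[u+v+w; u, v, w] = (q)_{u+v+w} / ((q)_u (q)_v (q)_w)`, set to `0` if any of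
`u, v, w` is negative. -/
noncomputable def qtrinom (u v w : ℤ) : RatFunc ℚ :=
  if 0 ≤ u ∧ 0 ≤ v ∧ 0 ≤ w then
    qPoch (u + v + w).toNat / (qPoch u.toNat * qPoch v.toNat * qPoch w.toNat) else 0

/-- `T n = n(n+1)/2`, the n-th triangular number (on `ℤ`, the division is exact). -/
def triZ (n : ℤ) : ℤ := n * (n + 1) / 2

lemma qPoch_succ (n : ℕ) : qPoch (n + 1) = qPoch n * (1 - (RatFunc.X : RatFunc ℚ) ^ (n + 1)) := by
  simp [qPoch, Finset.prod_range_succ]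

lemma one_sub_X_pow_ne (n : ℕ) : (1 - (RatFunc.X : RatFunc ℚ) ^ (n + 1)) ≠ 0 := by
  intro h
  have h1 : (RatFunc.X : RatFunc ℚ) ^ (n + 1) = 1 := (sub_eq_zero.mp h).symm
  rw [← RatFunc.algebraMap_X, ← map_pow, ← map_one (algebraMap (Polynomial ℚ) (RatFunc ℚ))] at h1
  have h2 := RatFunc.algebraMap_injective ℚ h1
  have h3 := congrArg (Polynomial.eval 0) h2
  simp at h3

lemma qPoch_ne (n : ℕ) : qPoch n ≠ 0 :=
  Finset.prod_ne_zero_iff.mpr fun t _ => one_sub_X_pow_ne t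

/-- Gaussian coefficients through the q-Pascal recursion. -/
noncomputable def gau : ℕ → ℕ → RatFunc ℚ
  | _, 0 => 1
  | 0, _ + 1 => 0
  | n + 1, k + 1 => gau n k + (RatFunc.X : RatFunc ℚ) ^ (k + 1) * gau n (k + 1)

lemma gau_zero_right (n : ℕ) : gau n 0 = 1 := by cases n <;> rfl

lemma gau_eq_zero (n : ℕ) : ∀ k, n < k → gau n k = 0 := by
  induction n with
  | zero => intro k hk; obtain ⟨k, rfl⟩ : ∃ t, k = t + 1 := ⟨k - 1, by omega⟩; rfl
  | succ n ih =>
    intro k hk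
    obtain ⟨k, rfl⟩ : ∃ t, k = t + 1 := ⟨k - 1, by omega⟩
    rw [gau, ih k (by omega), ih (k + 1) (by omega)]; simp

lemma gau_mul (n : ℕ) : ∀ a b, a + b = n → gau n a * (qPoch a * qPoch b) = qPoch n := by
  induction n with
  | zero =>
    intro a b h
    obtain ⟨rfl, rfl⟩ : a = 0 ∧ b = 0 := by omega
    simp [gau_zero_right, qPoch]
  | succ n ih =>
    intro a b h
    rcases a with _ | a
    · obtain rfl : b = n + 1 := by omega
      simp [gau_zero_right, qPoch]
    · rw [gau]
      have h1 := ih a b (by omega)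
      rcases b with _ | b
      · obtain rfl : a = n := by omega
        rw [gau_eq_zero a (a + 1) (by omega), qPoch_succ]
        linear_combination (1 - (RatFunc.X : RatFunc ℚ) ^ (a + 1)) * h1
      · have h2 := ih (a + 1) b (by omega)
        obtain rfl : n = a + 1 + b := by omega
        rw [qPoch_succ a] at h2 ⊢
        rw [qPoch_succ b] at h1 ⊢
        rw [qPoch_succ (a + 1 + b)]
        linear_combination (1 - (RatFunc.X : RatFunc ℚ) ^ (a + 1)) * h1 +
          (RatFunc.X : RatFunc ℚ) ^ (a + 1) * (1 - (RatFunc.X : RatFunc ℚ) ^ (b + 1)) * h2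

lemma gau_add (a b : ℕ) : gau (a + b) a = qPoch (a + b) / (qPoch a * qPoch b) := by
  rw [eq_div_iff (mul_ne_zero (qPoch_ne a) (qPoch_ne b)), gau_mul (a + b) a b rfl]

/-- q-Vandermonde. -/
lemma gau_vandermonde (n m : ℕ) : ∀ j, ∑ p ∈ Finset.HasAntidiagonal.antidiagonal j,
    (RatFunc.X : RatFunc ℚ) ^ ((m - p.1) * p.2) * gau m p.1 * gau n p.2 = gau (m + n) j := by
  induction m with
  | zero =>
    intro j
    rw [Finset.sum_eq_single (0, j)]
    · simp [gau_zero_right]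
    · rintro ⟨a, b⟩ h1 h2
      rw [Finset.HasAntidiagonal.mem_antidiagonal] at h1
      have : a ≠ 0 := by rintro rfl; apply h2; simp at h1; simp [h1]
      rw [gau_eq_zero 0 a (by omega)]; simp
    · intro h; simp at h
  | succ m ih =>
    intro j
    rcases j with _ | j
    · simp [gau_zero_right]
    · rw [show m + 1 + n = (m + n) + 1 by omega, gau, ← ih j, ← ih (j + 1)]
      rw [Finset.Nat.sum_antidiagonal_succ, Finset.Nat.sum_antidiagonal_succ]
      rw [mul_add (_ ^ _) (_ * _ * _), Finset.mul_sum, add_left_comm, ← Finset.sum_add_distrib]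
      congr 1
      · simp only [gau_zero_right]
        rw [show (m + 1 - 0) * (j + 1) = (j + 1) + (m - 0) * (j + 1) by simp; ring, pow_add]
        ring
      · apply Finset.sum_congr rfl
        rintro ⟨a, b⟩ h
        rw [Finset.HasAntidiagonal.mem_antidiagonal] at h
        simp only at h ⊢
        rw [gau, Nat.add_sub_add_right]
        rcases Nat.lt_or_ge m (a + 1) with hlt | hge
        · rw [gau_eq_zero m (a + 1) hlt]; ring
        · obtain ⟨c, rfl⟩ := Nat.exists_eq_add_of_le hge
          rw [show a + 1 + c - a = c + 1 by omega, show a + 1 + c - (a + 1) = c by omega, ← h]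
          ring

lemma two_mul_triZ (n : ℤ) : 2 * triZ n = n * (n + 1) := by
  unfold triZ
  exact Int.mul_ediv_cancel' (Int.even_mul_succ_self n).two_dvd

lemma triZ_rel (k a b : ℤ) :
    triZ (k + a + b) + triZ k = triZ (k + a) + triZ (k + b) + a * b := by
  have h1 := two_mul_triZ (k + a + b)
  have h2 := two_mul_triZ k
  have h3 := two_mul_triZ (k + a)
  have h4 := two_mul_triZ (k + b)
  have : 2 * (triZ (k + a + b) + triZ k) = 2 * (triZ (k + a) + triZ (k + b) + a * b) := by
    linear_combination h1 + h2 - h3 - h4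
  omega

lemma qbin_nat (a b : ℕ) (x y : ℤ) (hx : x = a + b) (hy : y = a) :
    qbin x y = qPoch (a + b) / (qPoch a * qPoch b) := by
  subst hx hy
  rw [qbin, if_pos (by omega)]
  congr <;> omega

lemma term_eq (k a b s : ℕ) :
    (RatFunc.X : RatFunc ℚ) ^ (triZ ((k + a : ℕ) + (k + b : ℕ) - k) + triZ k) *
        (qPoch (k + s) / (qPoch k * qPoch s)) *
        (qPoch (a + (k + s)) / (qPoch a * qPoch (k + s))) *
        (qPoch (b + (k + s)) / (qPoch b * qPoch (k + s))) =
    (RatFunc.X : RatFunc ℚ) ^ (triZ (k + a : ℕ) + triZ (k + b : ℕ)) *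
      (qPoch (a + (k + s)) / (qPoch s * qPoch (k + a))) *
      ((RatFunc.X : RatFunc ℚ) ^ (a * b) * gau (k + a) k * gau (b + (k + s)) b) := by
  rw [gau_add, gau_add]
  have e : triZ ((k + a : ℕ) + (k + b : ℕ) - k) + triZ k
      = triZ (k + a : ℕ) + triZ (k + b : ℕ) + ((a * b : ℕ) : ℤ) := by
    have := triZ_rel k a b
    push_cast
    rw [← this]; congr 2; ring
  rw [e, zpow_add₀ RatFunc.X_ne_zero _ ((a * b : ℕ) : ℤ), zpow_natCast]
  have := qPoch_ne k
  have := qPoch_ne a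
  have := qPoch_ne b
  have := qPoch_ne s
  have := qPoch_ne (k + s)
  have := qPoch_ne (k + a)
  field_simp

/-- Identity (5.2), the case `L = M` of the double bounded key identity: for
`i, j ≥ 0` and `L ≥ i + j`,
`∑_{k=0}^{min(i,j)} q^{T_{i+j-k}+T_k} [L-i-j+k; k] [L-j; i-k] [L-i; j-k]
  = q^{T_i+T_j} [L; i, j, L-i-j]`. -/
theorem key_identity_equal_bounds (L i j : ℤ)
    (hi : 0 ≤ i) (hj : 0 ≤ j) (hL : i + j ≤ L) :
    ∑ k ∈ Finset.Icc (0 : ℤ) (min i j),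
      (RatFunc.X : RatFunc ℚ) ^ (triZ (i + j - k) + triZ k) *
        qbin (L - i - j + k) k * qbin (L - j) (i - k) * qbin (L - i) (j - k) =
    (RatFunc.X : RatFunc ℚ) ^ (triZ i + triZ j) * qtrinom i j (L - i - j) := by
  obtain ⟨s, hs⟩ : ∃ s : ℕ, L = i + j + s := ⟨(L - i - j).toNat, by omega⟩
  lift i to ℕ using hi
  lift j to ℕ using hj
  subst hs
  have hR : qtrinom i j ((i : ℤ) + j + s - i - j) =
      qPoch (i + s) / (qPoch s * qPoch i) * gau (i + (j + s)) j := by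
    rw [show i + (j + s) = j + (i + s) by omega, gau_add, qtrinom, if_pos (by omega)]
    rw [show ((i : ℤ) + j + ((i : ℤ) + j + s - i - j)).toNat = j + (i + s) by omega,
      show ((i : ℤ) + j + s - i - j).toNat = s by omega, Int.toNat_natCast, Int.toNat_natCast]
    have := qPoch_ne i
    have := qPoch_ne j
    have := qPoch_ne s
    have := qPoch_ne (i + s)
    field_simp
  rw [hR, ← gau_vandermonde, Finset.mul_sum, Finset.mul_sum]
  refine Finset.sum_of_injOn (fun k : ℤ => (k.toNat, j - k.toNat)) ?_ ?_ ?_ ?_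
  · intro x hx y hy hxy
    simp only [Finset.coe_Icc, Set.mem_Icc, Prod.mk.injEq] at hx hy hxy
    omega
  · intro x hx
    simp only [Finset.coe_Icc, Set.mem_Icc, Finset.mem_coe, Finset.HasAntidiagonal.mem_antidiagonal] at hx ⊢
    omega
  · rintro ⟨a, b⟩ hab hn
    rw [Finset.HasAntidiagonal.mem_antidiagonal] at hab
    simp only at hab
    have : i < a := by
      by_contra hc
      apply hn
      refine ⟨(a : ℤ), ?_, ?_⟩
      · simp only [Finset.coe_Icc, Set.mem_Icc]; omega
      · simp only [Int.toNat_natCast, Prod.mk.injEq, true_and]; omega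
    rw [gau_eq_zero i a this]; simp
  · intro x hx
    rw [Finset.mem_Icc] at hx
    lift x to ℕ using hx.1
    obtain ⟨a, rfl⟩ : ∃ a, i = x + a := ⟨i - x, by omega⟩
    obtain ⟨b, rfl⟩ : ∃ b, j = x + b := ⟨j - x, by omega⟩
    rw [qbin_nat x s _ _ (by push_cast; ring) rfl,
      qbin_nat a (x + s) _ _ (by push_cast; ring) (by push_cast; ring),
      qbin_nat b (x + s) _ _ (by push_cast; ring) (by push_cast; ring), term_eq]
    simp only [Int.toNat_natCast, Nat.add_sub_cancel_left]
    rw [show a + (x + s) = x + a + s by omega, show b + (x + s) = x + b + s by omega]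
    ring
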